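/- The determinant of the moment matrix of the uniform design measure is det M₀ = (b₀ + (m−2)b₁)^{m−1} · (b₀ − 2b₁)^{(m−1)(m−2)/2}. -/

import Mathlib

open Matrix Finset

namespace OofA

/-- The index set `S` of pairs `(i,j)` with `i < j`. -/
abbrev Pairs (m : ℕ) := {ij : Fin m × Fin m // ij.1 < ij.2}

/-- `z_{ij}(a)`: for a treatment `a` (a permutation, `a k` being the component placed at
position `k`), this equals `c h` where `h` is the distance between the positions of the
components `i` and `j` in `a`, with sign `+` if `i` precedes `j` and `-` otherwise. -/
noncomputable def z {m : ℕ} (c : ℕ → ℝ) (a : Equiv.Perm (Fin m)) (ij : Pairs m) : ℝ :=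
  if (a.symm ij.1.1 : ℕ) < (a.symm ij.1.2 : ℕ) then
    c (Nat.dist (a.symm ij.1.1 : ℕ) (a.symm ij.1.2 : ℕ))
  else
    -c (Nat.dist (a.symm ij.1.1 : ℕ) (a.symm ij.1.2 : ℕ))

/-- The vector `x(a) = (1, z(a)ᵀ)ᵀ ∈ ℝ^p`, indexed by `Unit ⊕ Pairs m`. -/
noncomputable def x {m : ℕ} (c : ℕ → ℝ) (a : Equiv.Perm (Fin m)) : (Unit ⊕ Pairs m) → ℝ :=
  Sum.elim (fun _ => (1 : ℝ)) (z c a)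

/-- The moment matrix `M(w) = Σ_a w(a) x(a) x(a)ᵀ` of a design measure `w`. -/
noncomputable def momentMatrix {m : ℕ} (c : ℕ → ℝ) (w : Equiv.Perm (Fin m) → ℝ) :
    Matrix (Unit ⊕ Pairs m) (Unit ⊕ Pairs m) ℝ :=
  ∑ a : Equiv.Perm (Fin m), w a • Matrix.vecMulVec (x c a) (x c a)

/-- The moment matrix `M₀` of the uniform design measure `w₀(a) = 1/m!`. -/
noncomputable def M0 (m : ℕ) (c : ℕ → ℝ) : Matrix (Unit ⊕ Pairs m) (Unit ⊕ Pairs m) ℝ :=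
  momentMatrix c (fun _ => 1 / (Nat.factorial m : ℝ))

/-- A signed permutation matrix: exactly one nonzero entry in each row and in each column,
each nonzero entry being `1` or `-1`. -/
def IsSignedPerm {n : Type*} [Fintype n] (R : Matrix n n ℝ) : Prop :=
  (∀ i, ∃! j, R i j ≠ 0) ∧ (∀ j, ∃! i, R i j ≠ 0) ∧
    (∀ i j, R i j ≠ 0 → R i j = 1 ∨ R i j = -1)

/-- `b₀ = (2/(m(m−1))) Σ_{h=1}^{m−1} (m−h) c_h²`. -/
noncomputable def b0 (m : ℕ) (c : ℕ → ℝ) : ℝ :=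
  (2 / ((m : ℝ) * ((m : ℝ) - 1))) *
    ∑ h ∈ Finset.Icc 1 (m - 1), ((m : ℝ) - (h : ℝ)) * (c h) ^ 2

/-- `b₁ = (2/(m(m−1)(m−2))) Σ (m−h₁−h₂) c_{h₁} (2c_{h₁+h₂} − c_{h₂})`,
summed over `h₁, h₂ ≥ 1` with `h₁ + h₂ ≤ m − 1`. -/
noncomputable def b1 (m : ℕ) (c : ℕ → ℝ) : ℝ :=
  (2 / ((m : ℝ) * ((m : ℝ) - 1) * ((m : ℝ) - 2))) *
    ∑ h1 ∈ Finset.Icc 1 (m - 1), ∑ h2 ∈ Finset.Icc 1 (m - 1 - h1),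
      ((m : ℝ) - (h1 : ℝ) - (h2 : ℝ)) * c h1 * (2 * c (h1 + h2) - c h2)

/-- The `q × q` matrix `V` of (7). -/
noncomputable def V (m : ℕ) : Matrix (Pairs m) (Pairs m) ℝ := fun ij kl =>
  if (ij.1.1 = kl.1.1 ∧ ij.1.2 ≠ kl.1.2) ∨ (ij.1.1 ≠ kl.1.1 ∧ ij.1.2 = kl.1.2) then 1
  else if ij.1.1 = kl.1.2 ∨ ij.1.2 = kl.1.1 then -1
  else 0

def g (c : ℕ → ℝ) (u v : ℕ) : ℝ := if u < v then c (v-u) else if v < u then -c (u-v) else 0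

lemma g_anti (c u v) : g c u v = - g c v u := by
  unfold g; split_ifs <;> first | omega | simp
lemma g_self (c u) : g c u u = 0 := by simp [g]

lemma sum_lt2 (m : ℕ) (f : ℕ → ℝ) :
    ∑ u ∈ range m, ∑ v ∈ range m, (if u < v then f (v-u) else 0)
     = ∑ h ∈ Icc 1 (m-1), ((m:ℝ) - h) * f h := by
  have : ∀ h ∈ Icc 1 (m-1), ((m:ℝ) - h) * f h = ∑ u ∈ range (m-h), f h := by
    intro h hh
    rw [mem_Icc] at hh
    rw [sum_const, card_range, nsmul_eq_mul, Nat.cast_sub (by omega)]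
  rw [sum_congr rfl this]
  simp_rw [← sum_filter]
  rw [sum_sigma', sum_sigma']
  refine sum_nbij' (fun p => ⟨p.2 - p.1, p.1⟩) (fun p => ⟨p.2, p.2 + p.1⟩) ?_ ?_ ?_ ?_ ?_ <;>
    rintro ⟨a, b⟩ <;> simp <;> intros <;> omega

lemma sum_lt3 (m : ℕ) (f : ℕ → ℕ → ℝ) :
    ∑ u ∈ range m, ∑ v ∈ range m, ∑ w ∈ range m, (if u < v ∧ v < w then f (v-u) (w-v) else 0)
     = ∑ h1 ∈ Icc 1 (m-1), ∑ h2 ∈ Icc 1 (m-1-h1), ((m:ℝ) - h1 - h2) * f h1 h2 := by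
  have : ∀ h1 ∈ Icc 1 (m-1), ∀ h2 ∈ Icc 1 (m-1-h1),
      ((m:ℝ) - h1 - h2) * f h1 h2 = ∑ u ∈ range (m-h1-h2), f h1 h2 := by
    intro h hh h2 hh2
    rw [mem_Icc] at hh hh2
    rw [sum_const, card_range, nsmul_eq_mul, Nat.cast_sub (by omega), Nat.cast_sub (by omega)]
  rw [sum_congr rfl fun h1 h => sum_congr rfl (this h1 h)]
  simp_rw [← sum_filter]
  simp_rw [sum_sigma']
  refine sum_nbij' (fun p => ⟨p.2.1 - p.1, p.2.2 - p.2.1, p.1⟩)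
    (fun p => ⟨p.2.2, p.2.2 + p.1, p.2.2 + p.1 + p.2.1⟩) ?_ ?_ ?_ ?_ ?_ <;>
    rintro ⟨a, b, d⟩ <;> simp <;> intros <;> omega

lemma S2 (m : ℕ) (c : ℕ → ℝ) :
    ∑ u ∈ range m, ∑ v ∈ range m, g c u v * g c u v
     = 2 * ∑ h ∈ Icc 1 (m-1), ((m:ℝ) - h) * c h ^ 2 := by
  have e : ∀ u v, g c u v * g c u v = (if u < v then c (v-u) ^ 2 else 0)
      + (if v < u then c (u-v) ^ 2 else 0) := by
    intro u v; unfold g; split_ifs <;> first | omega | ring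
  simp_rw [e, sum_add_distrib]
  rw [sum_comm (f := fun u v => if v < u then c (u-v) ^ 2 else 0),
    sum_lt2 m (fun h => c h ^ 2)]
  ring

lemma S3 (m : ℕ) (c : ℕ → ℝ) :
    ∑ u ∈ range m, ∑ v ∈ range m, ∑ w ∈ range m, (if v = w then 0 else g c u v * g c u w)
     = 2 * ∑ h1 ∈ Icc 1 (m - 1), ∑ h2 ∈ Icc 1 (m - 1 - h1),
      ((m : ℝ) - (h1 : ℝ) - (h2 : ℝ)) * c h1 * (2 * c (h1 + h2) - c h2) := by
  let A : ℕ → ℕ → ℕ → ℝ := fun u v w => if u < v ∧ v < w then c (v-u) * c (w-u) else 0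
  let B : ℕ → ℕ → ℕ → ℝ := fun u v w => if u < v ∧ v < w then c (w-v) * c (w-u) else 0
  let C : ℕ → ℕ → ℕ → ℝ := fun u v w => if u < v ∧ v < w then c (v-u) * c (w-v) else 0
  have e : ∀ u v w, (if v = w then 0 else g c u v * g c u w) =
      A u v w + A u w v + B v w u + B w v u - C v u w - C w u v := by
    intro u v w
    simp only [A, B, C]
    unfold g
    rcases lt_trichotomy u v with h | h | h <;> rcases lt_trichotomy v w with h' | h' | h' <;>
      rcases lt_trichotomy u w with h'' | h'' | h'' <;> first | omega | skip
    all_goals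
      simp only [h, h', h'', not_lt_of_gt, lt_irrefl, if_true, if_false, true_and, false_and,
        and_true, and_false, ne_of_lt, ne_of_gt, and_self]
      try ring
  have hA : ∀ u v w, A u v w = if u < v ∧ v < w then c (v-u) * c (v-u + (w-v)) else 0 := by
    intro u v w
    simp only [A]
    split_ifs with h
    · rw [show v-u + (w-v) = w-u by omega]
    · rfl
  have hB : ∀ u v w, B u v w = if u < v ∧ v < w then c (w-v) * c (v-u + (w-v)) else 0 := by
    intro u v w
    simp only [B]
    split_ifs with h
    · rw [show v-u + (w-v) = w-u by omega]
    · rfl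
  have sA : ∑ u ∈ range m, ∑ v ∈ range m, ∑ w ∈ range m, A u v w = 
      ∑ h1 ∈ Icc 1 (m-1), ∑ h2 ∈ Icc 1 (m-1-h1), ((m:ℝ) - h1 - h2) * (c h1 * c (h1 + h2)) := by
    simp_rw [hA]
    exact sum_lt3 m (fun a b => c a * c (a+b))
  have sB : ∑ u ∈ range m, ∑ v ∈ range m, ∑ w ∈ range m, B u v w = 
      ∑ h1 ∈ Icc 1 (m-1), ∑ h2 ∈ Icc 1 (m-1-h1), ((m:ℝ) - h1 - h2) * (c h1 * c (h1 + h2)) := by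
    simp_rw [hB]
    rw [sum_lt3 m (fun a b => c b * c (a+b))]
    refine (sum_comm' (t' := Icc 1 (m-1)) (s' := fun h => Icc 1 (m-1-h)) ?_).trans ?_
    · intro x y; simp only [mem_Icc]; omega
    · refine sum_congr rfl fun x _ => sum_congr rfl fun y _ => ?_
      rw [add_comm y x]; ring
  have sC : ∑ u ∈ range m, ∑ v ∈ range m, ∑ w ∈ range m, C u v w = 
      ∑ h1 ∈ Icc 1 (m-1), ∑ h2 ∈ Icc 1 (m-1-h1), ((m:ℝ) - h1 - h2) * (c h1 * c h2) :=
    sum_lt3 m (fun a b => c a * c b)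
  -- rearrangements
  have r1 : ∀ T : ℕ → ℕ → ℕ → ℝ, ∑ u ∈ range m, ∑ v ∈ range m, ∑ w ∈ range m, T u w v =
      ∑ u ∈ range m, ∑ v ∈ range m, ∑ w ∈ range m, T u v w := by
    intro T; exact sum_congr rfl fun u _ => sum_comm
  have r2 : ∀ T : ℕ → ℕ → ℕ → ℝ, ∑ u ∈ range m, ∑ v ∈ range m, ∑ w ∈ range m, T v u w =
      ∑ u ∈ range m, ∑ v ∈ range m, ∑ w ∈ range m, T u v w := by
    intro T; exact sum_comm
  have r3 : ∀ T : ℕ → ℕ → ℕ → ℝ, ∑ u ∈ range m, ∑ v ∈ range m, ∑ w ∈ range m, T v w u =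
      ∑ u ∈ range m, ∑ v ∈ range m, ∑ w ∈ range m, T u v w := by
    intro T
    rw [r2 (fun u v w => T u w v), r1 T]
  have r4 : ∀ T : ℕ → ℕ → ℕ → ℝ, ∑ u ∈ range m, ∑ v ∈ range m, ∑ w ∈ range m, T w u v =
      ∑ u ∈ range m, ∑ v ∈ range m, ∑ w ∈ range m, T u v w := by
    intro T
    rw [r1 (fun u v w => T v u w), r2 T]
  have r5 : ∀ T : ℕ → ℕ → ℕ → ℝ, ∑ u ∈ range m, ∑ v ∈ range m, ∑ w ∈ range m, T w v u =
      ∑ u ∈ range m, ∑ v ∈ range m, ∑ w ∈ range m, T u v w := by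
    intro T
    rw [r1 (fun u v w => T v w u), r3 T]
  simp_rw [e, sum_sub_distrib, sum_add_distrib]
  rw [r1 A, r3 B, r5 B, r2 C, r4 C, sA, sB, sC]
  simp only [mul_sum, ← sum_add_distrib, ← sum_sub_distrib]
  refine sum_congr rfl fun x _ => sum_congr rfl fun y _ => ?_
  ring

lemma b0_eq (m : ℕ) (hm : 3 ≤ m) (c : ℕ → ℝ) :
    (m:ℝ) * (m-1) * b0 m c = ∑ u : Fin m, ∑ v : Fin m, g c u v * g c u v := by
  have h := S2 m c
  rw [← Fin.sum_univ_eq_sum_range (fun u => ∑ v ∈ range m, g c u v * g c u v)] at h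
  simp_rw [fun u => (Fin.sum_univ_eq_sum_range (fun v => g c u v * g c u v) m).symm] at h
  rw [h, b0]
  have : (3:ℝ) ≤ m := by exact_mod_cast hm
  have : (m:ℝ) ≠ 0 := by linarith
  have : (m:ℝ) - 1 ≠ 0 := by linarith
  field_simp

lemma b1_eq (m : ℕ) (hm : 3 ≤ m) (c : ℕ → ℝ) :
    (m:ℝ) * (m-1) * (m-2) * b1 m c = ∑ u : Fin m, ∑ v : Fin m, ∑ w : Fin m,
      (if v = w then 0 else g c u v * g c u w) := by
  have h := S3 m c
  rw [← Fin.sum_univ_eq_sum_range (fun u => ∑ v ∈ range m, ∑ w ∈ range m, (if v = w then 0 else g c u v * g c u w))] at h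
  simp_rw [fun u => (Fin.sum_univ_eq_sum_range (fun v => ∑ w ∈ range m, (if v = w then 0 else g c u v * g c u w)) m).symm,
   fun u v => (Fin.sum_univ_eq_sum_range (fun w => (if v = w then 0 else g c u v * g c u w)) m).symm, Fin.val_inj] at h
  rw [h, b1]
  have : (3:ℝ) ≤ m := by exact_mod_cast hm
  have : (m:ℝ) ≠ 0 := by linarith
  have : (m:ℝ) - 1 ≠ 0 := by linarith
  have : (m:ℝ) - 2 ≠ 0 := by linarith
  field_simp

open Equiv in
lemma trans3 {m : ℕ} (i j l i' j' l' : Fin m) (h1 : i ≠ j) (h2 : i ≠ l) (h3 : j ≠ l)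
    (h1' : i' ≠ j') (h2' : i' ≠ l') (h3' : j' ≠ l') :
    ∃ τ : Perm (Fin m), τ i = i' ∧ τ j = j' ∧ τ l = l' := by
  let τ1 : Perm (Fin m) := swap i i'
  let τ2 : Perm (Fin m) := swap (τ1 j) j' 
  let τ3 : Perm (Fin m) := swap (τ2 (τ1 l)) l'
  have a1 : τ1 i = i' := swap_apply_left _ _
  have a2 : τ2 i' = i' := swap_apply_of_ne_of_ne (by rw [← a1]; simpa using h1) h1'
  have a3 : τ3 i' = i' := swap_apply_of_ne_of_ne (by rw [← a2, ← a1]; simpa using h2) h2'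
  have a4 : τ2 (τ1 j) = j' := swap_apply_left _ _
  have a5 : τ3 j' = j' := swap_apply_of_ne_of_ne (by rw [← a4]; simpa using h3) h3'
  refine ⟨τ3 * (τ2 * τ1), ?_, ?_, ?_⟩
  · simp [a1, a2, a3]
  · simp [a4, a5]
  · simp [τ3]

open Equiv in
lemma sum_perm3 {m : ℕ} (F : Fin m → Fin m → Fin m → ℝ) (i j l : Fin m)
    (h1 : i ≠ j) (h2 : i ≠ l) (h3 : j ≠ l)
    (hF : ∀ u v w, (u = v ∨ u = w ∨ v = w) → F u v w = 0) :
    (m:ℝ) * (m-1) * (m-2) * ∑ σ : Perm (Fin m), F (σ i) (σ j) (σ l) =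
      m.factorial * ∑ u, ∑ v, ∑ w, F u v w := by
  set T := ∑ σ : Perm (Fin m), F (σ i) (σ j) (σ l) with hT
  have hc : ∀ i' j' l' : Fin m, ∑ σ : Perm (Fin m), F (σ i') (σ j') (σ l') =
      if i' = j' then 0 else if l' = i' then 0 else if l' = j' then 0 else T := by
    intro i' j' l'
    split_ifs with e1 e2 e3
    · exact sum_eq_zero fun σ _ => hF _ _ _ (by simp [e1])
    · exact sum_eq_zero fun σ _ => hF _ _ _ (by simp [e2])
    · exact sum_eq_zero fun σ _ => hF _ _ _ (by simp [e3])
    · obtain ⟨τ, t1, t2, t3⟩ := trans3 i j l i' j' l' h1 h2 h3 e1 (Ne.symm e2) (Ne.symm e3)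
      have := Equiv.sum_comp (Equiv.mulRight τ) (fun σ : Perm (Fin m) => F (σ i) (σ j) (σ l))
      rw [hT, ← this]
      simp [t1, t2, t3]
  have key : ∑ i' : Fin m, ∑ j' : Fin m, ∑ l' : Fin m,
      ∑ σ : Perm (Fin m), F (σ i') (σ j') (σ l') = (m:ℝ) * (m-1) * (m-2) * T := by
    simp_rw [hc]
    have in1 : ∀ i' j' : Fin m, (∑ l' : Fin m, if i' = j' then 0 else if l' = i' then 0 else
        if l' = j' then 0 else T) = if i' = j' then 0 else ((m:ℝ)-2) * T := by
      intro i' j'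
      split_ifs with e
      · simp
      · have : ∀ l' : Fin m, (if l' = i' then 0 else if l' = j' then 0 else T) =
          T - (if l' = i' then T else 0) - (if l' = j' then T else 0) := by
          intro l'
          split_ifs with h h'
          · exact absurd (h.symm.trans h') e
          all_goals ring
        simp_rw [this, sum_sub_distrib]
        simp; ring
    have in2 : ∀ i' : Fin m, (∑ j' : Fin m, if i' = j' then 0 else ((m:ℝ)-2) * T) =
        (m-1) * ((m-2) * T) := by
      intro i'
      have : ∀ j' : Fin m, (if i' = j' then 0 else ((m:ℝ)-2) * T) = ((m:ℝ)-2) * T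
          - (if i' = j' then ((m:ℝ)-2) * T else 0) := by
        intro j'; split_ifs <;> ring
      simp_rw [this, sum_sub_distrib]
      simp; ring
    simp_rw [in1, in2]
    simp; ring
  rw [← key]
  have sw : ∑ i' : Fin m, ∑ j' : Fin m, ∑ l' : Fin m,
      ∑ σ : Perm (Fin m), F (σ i') (σ j') (σ l') =
      ∑ σ : Perm (Fin m), ∑ i' : Fin m, ∑ j' : Fin m, ∑ l' : Fin m, F (σ i') (σ j') (σ l') := by
    rw [sum_comm (s := (univ : Finset (Perm (Fin m))))]
    refine sum_congr rfl fun i' _ => ?_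
    rw [sum_comm (s := (univ : Finset (Perm (Fin m))))]
    refine sum_congr rfl fun j' _ => ?_
    rw [sum_comm]
  rw [sw]
  have : ∀ σ : Perm (Fin m), ∑ i' : Fin m, ∑ j' : Fin m, ∑ l' : Fin m, F (σ i') (σ j') (σ l') =
      ∑ u, ∑ v, ∑ w, F u v w := by
    intro σ
    rw [← Equiv.sum_comp σ (fun u => ∑ v, ∑ w, F u v w)]
    refine sum_congr rfl fun i' _ => ?_
    rw [← Equiv.sum_comp σ (fun v => ∑ w, F (σ i') v w)]
    refine sum_congr rfl fun j' _ => ?_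
    rw [← Equiv.sum_comp σ (fun w => F (σ i') (σ j') w)]
  simp_rw [this]
  simp [Fintype.card_perm]

/-- pair version, derived from the triple version -/
lemma sum_perm2 {m : ℕ} (hm : 3 ≤ m) (F : Fin m → Fin m → ℝ) (i j : Fin m) (h1 : i ≠ j)
    (hF : ∀ u, F u u = 0) :
    (m:ℝ) * (m-1) * ∑ σ : Equiv.Perm (Fin m), F (σ i) (σ j) =
      m.factorial * ∑ u, ∑ v, F u v := by
  obtain ⟨l, hl⟩ : ∃ l, l ∉ ({i, j} : Finset (Fin m)) := by
    by_contra! h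
    have : (univ : Finset (Fin m)).card ≤ ({i, j} : Finset (Fin m)).card :=
      card_le_card fun x _ => h x
    have := this.trans card_le_two
    simp at this; omega
  simp at hl
  have h := sum_perm3 (fun u v w => if w = u then 0 else if w = v then 0 else F u v) i j l h1
    (Ne.symm hl.1) (Ne.symm hl.2) (by
      rintro u v w (h | h | h)
      · subst h; simp [hF]
      · simp [h]
      · simp [h])
  simp only [EmbeddingLike.apply_eq_iff_eq, hl.1, hl.2, if_false] at h
  have in1 : ∀ u v : Fin m, (∑ w : Fin m, if w = u then 0 else if w = v then 0 else F u v)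
      = ((m:ℝ)-2) * F u v := by
    intro u v
    by_cases e : u = v
    · subst e; simp [hF]
    have : ∀ w : Fin m, (if w = u then 0 else if w = v then 0 else F u v) =
        F u v - (if w = u then F u v else 0) - (if w = v then F u v else 0) := by
      intro l'
      split_ifs with h h'
      · exact absurd (h.symm.trans h') e
      all_goals ring
    simp_rw [this, sum_sub_distrib]
    simp; ring
  simp_rw [in1, ← mul_sum] at h
  have : (3:ℝ) ≤ m := by exact_mod_cast hm
  have : (m:ℝ) - 2 ≠ 0 := by linarith
  apply mul_left_cancel₀ this
  linarith

section
variable {m : ℕ} (c : ℕ → ℝ)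
open Equiv

lemma Q_pair (hm : 3 ≤ m) (i j : Fin m) (h : i ≠ j) :
    ∑ σ : Perm (Fin m), g c (σ i) (σ j) * g c (σ i) (σ j) = m.factorial * b0 m c := by
  have h := sum_perm2 hm (fun u v => g c u v * g c u v) i j h (by simp [g_self])
  rw [← b0_eq m hm] at h
  have : (3:ℝ) ≤ m := by exact_mod_cast hm
  have h1 : (m:ℝ) ≠ 0 := by linarith
  have h2 : (m:ℝ) - 1 ≠ 0 := by linarith
  apply mul_left_cancel₀ (mul_ne_zero h1 h2)
  linarith

lemma Q_triple (hm : 3 ≤ m) (i j l : Fin m) (h : i ≠ j) (h' : i ≠ l) (h'' : j ≠ l) :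
    ∑ σ : Perm (Fin m), g c (σ i) (σ j) * g c (σ i) (σ l) = m.factorial * b1 m c := by
  have h := sum_perm3 (fun u v w => if v = w then 0 else g c u v * g c u w) i j l h h' h'' (by
    rintro u v w (h | h | h) <;> simp [h, g_self])
  rw [← b1_eq m hm] at h
  have : (3:ℝ) ≤ m := by exact_mod_cast hm
  have h1 : (m:ℝ) ≠ 0 := by linarith
  have h2 : (m:ℝ) - 1 ≠ 0 := by linarith
  have h3 : (m:ℝ) - 2 ≠ 0 := by linarith
  simp only [EmbeddingLike.apply_eq_iff_eq, h'', if_false] at h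
  apply mul_left_cancel₀ (mul_ne_zero (mul_ne_zero h1 h2) h3)
  linarith

lemma Q_one (i j : Fin m) :
    ∑ σ : Perm (Fin m), g c (σ i) (σ j) = 0 := by
  have : ∑ σ : Perm (Fin m), g c (σ i) (σ j) = - ∑ σ : Perm (Fin m), g c (σ i) (σ j) := by
    conv_lhs => rw [← Equiv.sum_comp (Equiv.mulRight (swap i j))]
    rw [← sum_neg_distrib]
    refine sum_congr rfl fun σ _ => ?_
    simp [g_anti c (σ j)]
  linarith

lemma Q_disj (i j k l : Fin m) (h1 : k ≠ i) (h2 : k ≠ j) (h3 : l ≠ i) (h4 : l ≠ j) :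
    ∑ σ : Perm (Fin m), g c (σ i) (σ j) * g c (σ k) (σ l) = 0 := by
  have : ∑ σ : Perm (Fin m), g c (σ i) (σ j) * g c (σ k) (σ l)
      = - ∑ σ : Perm (Fin m), g c (σ i) (σ j) * g c (σ k) (σ l) := by
    conv_lhs => rw [← Equiv.sum_comp (Equiv.mulRight (swap i j))]
    rw [← sum_neg_distrib]
    refine sum_congr rfl fun σ _ => ?_
    simp [g_anti c (σ j), swap_apply_of_ne_of_ne, h1, h2, h3, h4]
  linarith

/-- incidence -/
def Inc (m : ℕ) : Matrix (Pairs m) (Fin m) ℝ := fun p k =>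
  (if p.1.1 = k then 1 else 0) - (if p.1.2 = k then 1 else 0)

lemma z_eq (a : Perm (Fin m)) (p : Pairs m) : z c a p = g c (a⁻¹ p.1.1) (a⁻¹ p.1.2) := by
  have : (a.symm p.1.1 : ℕ) ≠ a.symm p.1.2 := by
    rw [Ne, Fin.val_inj]; simpa using p.2.ne
  change _ = g c (a.symm p.1.1) (a.symm p.1.2)
  unfold z g
  split_ifs with h h'
  · rw [Nat.dist_eq_sub_of_le h.le]
  · rw [Nat.dist_eq_sub_of_le_right h'.le]
  · omega

lemma sum_zz (hm : 3 ≤ m) (p r : Pairs m) : ∑ a : Perm (Fin m), z c a p * z c a r =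
    m.factorial * ((b0 m c - 2 * b1 m c) * (if p = r then 1 else 0) +
      b1 m c * (Inc m * (Inc m)ᵀ) p r) := by
  simp_rw [z_eq]
  have hinv := Equiv.sum_comp (Equiv.inv (Perm (Fin m))) (fun a => g c (a p.1.1) (a p.1.2) *
    g c (a r.1.1) (a r.1.2))
  simp only [Equiv.inv_apply] at hinv
  rw [hinv]
  obtain ⟨⟨i, j⟩, hij⟩ := p
  obtain ⟨⟨k, l⟩, hkl⟩ := r
  have hI : (Inc m * (Inc m)ᵀ) ⟨⟨i, j⟩, hij⟩ ⟨⟨k, l⟩, hkl⟩ =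
     (if i = k then 1 else 0) - (if i = l then 1 else 0) - (if j = k then 1 else 0)
     + (if j = l then 1 else 0) := by
    simp [Matrix.mul_apply, Inc, sub_mul, mul_sub, sum_sub_distrib, eq_comm]
    ring
  rw [hI]
  simp only [Subtype.mk.injEq, Prod.mk.injEq]
  simp only at hij hkl
  by_cases e1 : i = k
  · subst e1
    by_cases e2 : j = l
    · subst e2
      rw [Q_pair c hm _ _ hij.ne]
      simp only [hij.ne, hij.ne', if_true, if_false, and_self]; ring
    · rw [Q_triple c hm _ _ _ hij.ne hkl.ne e2]
      simp [hij.ne', hkl.ne, e2]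
  by_cases e2 : j = l
  · subst e2
    simp_rw [g_anti c _ (((_ : Perm (Fin m)) j : Fin m) : ℕ), neg_mul_neg]
    rw [Q_triple c hm _ _ _ hij.ne' hkl.ne' e1]
    simp [hij.ne, hkl.ne', e1]
  by_cases e3 : i = l
  · subst e3
    have : ∀ σ : Perm (Fin m), g c (σ i) (σ j) * g c (σ k) (σ i) =
      - (g c (σ i) (σ j) * g c (σ i) (σ k)) := by
      intro σ; rw [g_anti c (σ k)]; ring
    simp_rw [this, sum_neg_distrib]
    rw [Q_triple c hm _ _ _ hij.ne hkl.ne' (hkl.trans hij).ne']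
    simp [e1, e2, (hkl.trans hij).ne']
  by_cases e4 : j = k
  · subst e4
    have : ∀ σ : Perm (Fin m), g c (σ i) (σ j) * g c (σ j) (σ l) =
      - (g c (σ j) (σ i) * g c (σ j) (σ l)) := by
      intro σ; rw [g_anti c (σ i)]; ring
    simp_rw [this, sum_neg_distrib]
    rw [Q_triple c hm _ _ _ hij.ne' hkl.ne e3]
    simp [e1, e2, e3]
  rw [Q_disj c _ _ _ _ (Ne.symm e1) (Ne.symm e4) (Ne.symm e3) (Ne.symm e2)]
  simp [e1, e2, e3, e4]

lemma M0_eq (hm : 3 ≤ m) : M0 m c = fromBlocks 1 0 0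
    (Matrix.scalar (Pairs m) (b0 m c - 2 * b1 m c) - (-(b1 m c) • Inc m) * (Inc m)ᵀ) := by
  have hf : (m.factorial : ℝ) ≠ 0 := by exact_mod_cast m.factorial_ne_zero
  have e : ∀ s t, M0 m c s t = (1 / m.factorial) * ∑ a : Perm (Fin m), x c a s * x c a t := by
    intro s t
    simp [M0, momentMatrix, Matrix.sum_apply, vecMulVec_apply, mul_sum]
  have hz : ∀ p, ∑ a : Perm (Fin m), z c a p = 0 := by
    intro p
    simp_rw [z_eq]
    have hinv := Equiv.sum_comp (Equiv.inv (Perm (Fin m))) (fun a => g c (a p.1.1) (a p.1.2))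
    simp only [Equiv.inv_apply] at hinv
    rw [hinv, Q_one]
  ext s t
  rw [e]
  rcases s with s | s <;> rcases t with t | t
  · simp [x, Fintype.card_perm, hf]
  · simp [x, hz]
  · simp [x, hz]
  · simp only [x, Sum.elim_inr, sum_zz c hm, fromBlocks_apply₂₂]
    simp [Matrix.diagonal_apply]
    field_simp
end

lemma det_comm {n k : Type*} [Fintype n] [DecidableEq n] [Fintype k] [DecidableEq k]
    (A : Matrix n k ℝ) (B : Matrix k n ℝ) (μ : ℝ) (h : Fintype.card k ≤ Fintype.card n) :
    (Matrix.scalar n μ - A * B).det =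
      μ ^ (Fintype.card n - Fintype.card k) * (Matrix.scalar k μ - B * A).det := by
  rw [← Matrix.eval_charpoly, ← Matrix.eval_charpoly, Matrix.charpoly_mul_comm_of_le _ _ h]
  simp

lemma sum_pairs (m : ℕ) (φ : Fin m → Fin m → ℝ) (hs : ∀ i j, φ i j = φ j i)
    (h0 : ∀ i, φ i i = 0) :
    2 * ∑ p : Pairs m, φ p.1.1 p.1.2 = ∑ i, ∑ j, φ i j := by
  have h1 : ∑ p : Pairs m, φ p.1.1 p.1.2 = ∑ i, ∑ j, if i < j then φ i j else 0 := by
    rw [← Finset.sum_product' (f := fun i j => if i < j then φ i j else 0), univ_product_univ,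
      ← sum_filter]
    exact (Finset.sum_subtype (univ.filter (fun ij : Fin m × Fin m => ij.1 < ij.2)) (by simp)
      (fun p => φ p.1 p.2)).symm
  have h2 : ∀ i j, φ i j = (if i < j then φ i j else 0) + (if j < i then φ j i else 0) := by
    intro i j
    rcases lt_trichotomy i j with h | h | h
    · simp [h, h.not_gt]
    · simp [h, h0]
    · simp [h, h.not_gt, hs i j]
  rw [sum_congr rfl fun i _ => sum_congr rfl fun j _ => h2 i j]
  simp_rw [sum_add_distrib]
  rw [sum_comm (f := fun i j => if j < i then φ j i else 0), h1]
  ring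

lemma card_pairs (m : ℕ) : (2 * Fintype.card (Pairs m) : ℝ) = m * (m - 1) := by
  have h := sum_pairs m (fun i j => if i = j then 0 else 1) (by simp [eq_comm]) (by simp)
  have e : ∀ p : Pairs m, (if p.1.1 = p.1.2 then (0:ℝ) else 1) = 1 := fun p => by simp [p.2.ne]
  have e2 : ∀ i j : Fin m, (if i = j then (0:ℝ) else 1) = 1 - (if i = j then 1 else 0) := by
    intro i j; split_ifs <;> simp
  simp only [e] at h
  simp_rw [e2, sum_sub_distrib] at h
  simpa [mul_sub] using h

lemma IncT (m : ℕ) (k l : Fin m) : ((Inc m)ᵀ * Inc m) k l = (if k = l then (m:ℝ) else 0) - 1 := by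
  have h := sum_pairs m (fun i j => ((if i = k then 1 else 0) - (if j = k then 1 else 0)) *
    ((if i = l then 1 else 0) - (if j = l then 1 else 0))) (by intros; ring) (by simp)
  have h2 : ((Inc m)ᵀ * Inc m) k l = ∑ p : Pairs m,
    ((if p.1.1 = k then 1 else 0) - (if p.1.2 = k then 1 else 0)) *
    ((if p.1.1 = l then 1 else 0) - (if p.1.2 = l then 1 else 0)) := by
    simp [Matrix.mul_apply, Inc]
  rw [← h2] at h
  have h3 : ∑ i : Fin m, ∑ j : Fin m, ((if i = k then (1:ℝ) else 0) - (if j = k then 1 else 0)) *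
    ((if i = l then 1 else 0) - (if j = l then 1 else 0)) =
      2 * ((if k = l then (m:ℝ) else 0) - 1) := by
    simp [mul_sub, sum_sub_distrib, eq_comm (a := l) (b := k)]
    split_ifs <;> ring
  rw [h3] at h
  linarith

lemma det_small (m : ℕ) (hm : 3 ≤ m) (α β : ℝ) :
    (Matrix.scalar (Fin m) α - (Inc m)ᵀ * (-β • Inc m)).det = (α + m * β) ^ (m-1) * α := by
  have e : Matrix.scalar (Fin m) α - (Inc m)ᵀ * (-β • Inc m) =
      Matrix.scalar (Fin m) (α + m * β) - (Matrix.of fun (_ : Fin m) (_ : Unit) => β) *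
        (Matrix.of fun (_ : Unit) (_ : Fin m) => (1:ℝ)) := by
    ext k l
    rw [Matrix.mul_smul]
    simp only [Matrix.sub_apply, Matrix.smul_apply, IncT]
    simp [Matrix.mul_apply, Matrix.diagonal_apply]
    split_ifs <;> ring
  rw [e, det_comm _ _ _ (by simp; omega)]
  simp [Matrix.mul_apply]

/-- `det M₀ = (b₀ + (m−2)b₁)^{m−1} (b₀ − 2b₁)^{(m−1)(m−2)/2}`. -/
theorem statement12 {m : ℕ} (hm : 3 ≤ m) (c : ℕ → ℝ) (hc1 : c 1 = 1)
    (hmono : ∀ h : ℕ, 1 ≤ h → h + 1 ≤ m - 1 → c (h + 1) ≤ c h)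
    (hlast : 0 ≤ c (m - 1)) :
    (M0 m c).det = (b0 m c + ((m : ℝ) - 2) * b1 m c) ^ (m - 1) *
      (b0 m c - 2 * b1 m c) ^ ((m - 1) * (m - 2) / 2) := by
  rw [M0_eq c hm, det_fromBlocks_zero₁₂, det_one, one_mul]
  have hq := card_pairs m
  obtain ⟨n, rfl⟩ : ∃ n, m = n + 3 := ⟨m - 3, by omega⟩
  have hq' : 2 * Fintype.card (Pairs (n+3)) = (n+3) * (n+2) := by
    have : (2 * Fintype.card (Pairs (n+3)) : ℝ) = (n+3) * (n+2) := by
      rw [hq]; push_cast; ring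
    exact_mod_cast this
  have hx : (n + 3 - 1) * (n + 3 - 2) / 2 = Fintype.card (Pairs (n+3)) - (n+3) + 1 := by
    apply Nat.div_eq_of_eq_mul_left (by norm_num)
    have : (n + 3 - 1) * (n + 3 - 2) = (n+2)*(n+1) := rfl
    rw [this]
    have : (n+3)*(n+2) = n*n + 5*n+6 := by ring
    have : (n+2)*(n+1) = n*n+3*n+2 := by ring
    omega
  rw [det_comm _ _ _ (by rw [Fintype.card_fin]; nlinarith), det_small _ hm, hx, pow_succ,
    Fintype.card_fin]
  rw [show b0 (n+3) c - 2 * b1 (n+3) c + ((n+3 : ℕ) : ℝ) * b1 (n+3) c =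
    b0 (n+3) c + (((n+3 : ℕ) : ℝ) - 2) * b1 (n+3) c by ring]
  ring
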